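/- Let (𝔩,𝔪) be a permissible pair with the algorithm notations in place. Then D(𝔩,𝔪) = |𝔪|, i.e. |ν(𝔩,𝔪)₁| − |ν(𝔩,𝔪)₂| + |ν(𝔩,𝔪)₃| equals the number of segments of 𝔪. -/

import Mathlib

/-!
Fix `i₁ ∈ I`, put `v = e(Δ_{i₁})`, and count the pairs with first entry `i₁`.  Along a cycle
`(i_1, …, i_s, j_t)` of `σ` the end points weakly increase (`end_le_of_lt`, `depth_le_ladder`)
while `b(Δ_{j_t}) ≥ b(Δ_{i_1}) ≥ … ≥ b(Δ_{i_s})`.  Hence the elements of end point `v` form one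
block of each cycle.  The pairs in `ν₁` and `ν₃` record the elements `x` that enter such a block
with `b(Δ_x) ≥ b(Δ_{i₁})`; the pairs in `ν₂` record the elements `y` that leave it, towards a
larger end point, with `b(Δ_y) > b(Δ_{i₁})`.  Each cycle contains at most one recorded entrance
and at most one recorded exit, so both kinds are counted by their depths.

The depths of the recorded entrances are those of the recorded exits together with `𝔡(i₁)`, which
is not the depth of a recorded exit (`image_entrances`).  The essential point is that a recorded
entrance `x` of depth `t' ≠ 𝔡(i₁)` has a recorded exit in its cycle:

* `t' > 𝔡(i₁)` is impossible: as `Δ_{i₁}` lies weakly below `Δ_{j_{t'}}`, some `z` of depth `t'` has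
  `Δ_z ≪ Δ_{i₁}` (`exists_depth_eq`), and `z` would have to come after `x` in the cycle although
  `e(Δ_z) < v`;
* if `t' < 𝔡(i₁)` then `e(Δ_{j_{t'}}) > e(Δ_{j_{𝔡(i₁)}}) ≥ v`, so the block ends before `j_{t'}`,
  and at its last element the begin point exceeds `b(Δ_{i₁})`, by monotonicity of the depth
  among segments with a common end point (`depth_anti`).

So every `i₁` contributes exactly `1` to `D(𝔩,𝔪)`.
-/

/-- A *segment* `Δ(a,b)`: a pair of integers `a ≤ b`.  `b` is the begin point
and `e` the end point. -/
structure Segment where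
  b : ℤ
  e : ℤ
  le : b ≤ e

namespace Segment

/-- `Δ₁ ≪ Δ₂` : `b(Δ₁) < b(Δ₂)` and `e(Δ₁) < e(Δ₂)`. -/
def ll (Δ₁ Δ₂ : Segment) : Prop := Δ₁.b < Δ₂.b ∧ Δ₁.e < Δ₂.e

/-- `Δ₁ ≺ Δ₂` : `b(Δ₁) < b(Δ₂)`, `e(Δ₁) < e(Δ₂)` and `e(Δ₁) ≥ b(Δ₂) - 1`. -/
def prec (Δ₁ Δ₂ : Segment) : Prop := Δ₁.b < Δ₂.b ∧ Δ₁.e < Δ₂.e ∧ Δ₂.b - 1 ≤ Δ₁.e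

/-- `⁻Δ = Δ(a-1, b-1)`. -/
def shiftDown (Δ : Segment) : Segment := ⟨Δ.b - 1, Δ.e - 1, by have := Δ.le; omega⟩

end Segment

/-- The standing data of the inverse Knuth–Viennot algorithm: a nonzero multisegment
`𝔪 = Σ_{i ∈ I} Δ_i` indexed by `I = Fin n` (linearly ordered compatibly with begin
points, ties broken by reversed end points), and a ladder multisegment
`𝔩 = Σ_{t ∈ J} Δ_{j_t}` indexed by `J = Fin l` (`jseg t` is the segment `Δ_{j_{t+1}}`,
enumerated so that `Δ_{j_l} ≪ ⋯ ≪ Δ_{j_1}`), such that the pair `(𝔩, 𝔪)` is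
permissible. -/
structure KVData where
  n : ℕ
  l : ℕ
  npos : 0 < n
  lpos : 0 < l
  iseg : Fin n → Segment
  jseg : Fin l → Segment
  iOrder : ∀ i₁ i₂ : Fin n, i₂ < i₁ →
    (iseg i₂).b < (iseg i₁).b ∨ ((iseg i₂).b = (iseg i₁).b ∧ (iseg i₁).e ≤ (iseg i₂).e)
  ladder : ∀ t t' : Fin l, t < t' → Segment.ll (jseg t') (jseg t)
  permissible : ∀ (m : ℕ) (c : Fin m → Fin n),
    (∀ r s : Fin m, r < s → Segment.ll (iseg (c s)) (iseg (c r))) →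
    ∃ φ : Fin m → Fin l, StrictMono φ ∧
      ∀ t : Fin m, Segment.prec (Segment.shiftDown (iseg (c t))) (jseg (φ t))

namespace KVData

variable (D : KVData)

/-- The segment attached to an index in `I ⊔ J`. -/
def segOf : Fin D.n ⊕ Fin D.l → Segment := Sum.elim D.iseg D.jseg

/-- The set `{t : ⁻Δ_i ≪ Δ_{j_t}}` (0-based positions in the ladder `𝔩`). -/
def dPrimeSet (i : Fin D.n) : Set ℕ :=
  {t : ℕ | ∃ h : t < D.l, Segment.ll (Segment.shiftDown (D.iseg i)) (D.jseg ⟨t, h⟩)}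

/-- The set `{𝔡'(i_k) - k : i = i_0, Δ_{i_{r+1}} ≪ Δ_{i_r}}` whose minimum is `𝔡(i)`. -/
def depthSet (d' : Fin D.n → ℕ) (i : Fin D.n) : Set ℤ :=
  {z : ℤ | ∃ (k : ℕ) (c : ℕ → Fin D.n), c 0 = i ∧
    (∀ r < k, Segment.ll (D.iseg (c (r + 1))) (D.iseg (c r))) ∧
    z = (d' (c k) : ℤ) - (k : ℤ)}

/-- `d'` is the function `𝔡'` and `d` the depth function `𝔡` on `I ⊔ J`
(`𝔡'(i) = max{t : ⁻Δ_i ≪ Δ_{j_t}}`, `𝔡(i) = min{𝔡'(i_k) - k}`, `𝔡(j_t) = t`). -/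
def DepthSpec (d' : Fin D.n → ℕ) (d : Fin D.n ⊕ Fin D.l → ℤ) : Prop :=
  (∀ i, IsGreatest (D.dPrimeSet i) (d' i)) ∧
  (∀ i, IsLeast (D.depthSet d' i) (d (Sum.inl i))) ∧
  (∀ t : Fin D.l, d (Sum.inr t) = (t : ℤ))

/-- `σ` is the permutation of `I ⊔ J` whose disjoint cycles are `(i_1, …, i_s, j_t)`
where `{i_1 > … > i_s} ∪ {j_t} = 𝔡⁻¹(t)`:  an element `i ∈ I` is sent to the largest
element of `I` below it in its fiber of `𝔡`, or to the `J`-element of the fiber if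
there is none; the `J`-element of a fiber is sent to the largest `I`-element of the
fiber, or to itself if there is none. -/
def SigmaSpec (d : Fin D.n ⊕ Fin D.l → ℤ) (σ : Equiv.Perm (Fin D.n ⊕ Fin D.l)) : Prop :=
  (∀ i : Fin D.n,
    (∃ i' : Fin D.n,
        IsGreatest {i'' : Fin D.n | i'' < i ∧ d (Sum.inl i'') = d (Sum.inl i)} i' ∧
        σ (Sum.inl i) = Sum.inl i')
    ∨ ((¬ ∃ i'' : Fin D.n, i'' < i ∧ d (Sum.inl i'') = d (Sum.inl i)) ∧
        ∃ t : Fin D.l, (t : ℤ) = d (Sum.inl i) ∧ σ (Sum.inl i) = Sum.inr t)) ∧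
  (∀ t : Fin D.l,
    (∃ i : Fin D.n,
        IsGreatest {i' : Fin D.n | d (Sum.inl i') = (t : ℤ)} i ∧
        σ (Sum.inr t) = Sum.inl i)
    ∨ ((¬ ∃ i : Fin D.n, d (Sum.inl i) = (t : ℤ)) ∧ σ (Sum.inr t) = Sum.inr t))

/-- `e(Δ♣_x) ≠ e(Δ_x)`, i.e. the end point changes at `x`
(recall `Δ♣_x = Δ(b(Δ_x), e(Δ_{σ(x)}))`). -/
def breaksEnd (σ : Equiv.Perm (Fin D.n ⊕ Fin D.l)) (x : Fin D.n ⊕ Fin D.l) : Prop :=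
  (D.segOf (σ x)).e ≠ (D.segOf x).e

/-- `vee` is the map `x ↦ x^∨`:  `x^∨ = σ^{-r}(x)` for the least `r ≥ 1` such that
`e(Δ♣_{σ^{-r}(x)}) ≠ e(Δ_{σ^{-r}(x)})`, and `x^∨ = j_{𝔡(x)}` if no such `r` exists. -/
def VeeSpec (d : Fin D.n ⊕ Fin D.l → ℤ) (σ : Equiv.Perm (Fin D.n ⊕ Fin D.l))
    (vee : Fin D.n ⊕ Fin D.l → Fin D.n ⊕ Fin D.l) : Prop :=
  ∀ x : Fin D.n ⊕ Fin D.l,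
    ((∃ r : ℕ, 1 ≤ r ∧ D.breaksEnd σ ((⇑σ.symm)^[r] x)) →
      ∃ r : ℕ, 1 ≤ r ∧ vee x = (⇑σ.symm)^[r] x ∧ D.breaksEnd σ ((⇑σ.symm)^[r] x) ∧
        ∀ r' : ℕ, 1 ≤ r' → r' < r → ¬ D.breaksEnd σ ((⇑σ.symm)^[r'] x)) ∧
    ((¬ ∃ r : ℕ, 1 ≤ r ∧ D.breaksEnd σ ((⇑σ.symm)^[r] x)) →
      ∃ t : Fin D.l, (t : ℤ) = d x ∧ vee x = Sum.inr t)

/-- The multisegment `𝔪` of the data. -/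
def mSeg : Multiset Segment := Multiset.map D.iseg Finset.univ.val

/-- The ladder multisegment `𝔩` of the data. -/
def lSeg : Multiset Segment := Multiset.map D.jseg Finset.univ.val

end KVData

namespace KVData

variable {D : KVData} {d' : Fin D.n → ℕ} {d : Fin D.n ⊕ Fin D.l → ℤ}
  {σ : Equiv.Perm (Fin D.n ⊕ Fin D.l)}

/-! ### The depth function -/

theorem depth_lt_of_ll (h : D.DepthSpec d' d) {i i' : Fin D.n}
    (hll : Segment.ll (D.iseg i') (D.iseg i)) : d (Sum.inl i) < d (Sum.inl i') := by
  obtain ⟨k, c, hc0, hc, hz⟩ := (h.2.1 i').1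
  have := @(h.2.1 i).2 ((d' (c k) : ℤ) - ((k + 1 : ℕ) : ℤ))
    ⟨k + 1, fun r => Nat.casesOn r i c, rfl, ?_, rfl⟩
  · push_cast at this
    omega
  · intro r hr
    cases r with
    | zero => simpa [hc0] using hll
    | succ r => exact hc r (by omega)

theorem depth_le_dPrime (h : D.DepthSpec d' d) (i : Fin D.n) : d (Sum.inl i) ≤ d' i :=
  (h.2.1 i).2 ⟨0, fun _ => i, rfl, by simp, by simp⟩

theorem le_dPrime (h : D.DepthSpec d' d) {i : Fin D.n} {t : Fin D.l}
    (hb : (D.iseg i).b ≤ (D.jseg t).b) (he : (D.iseg i).e ≤ (D.jseg t).e) : (t : ℕ) ≤ d' i := by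
  refine (h.1 i).2 ⟨t.2, ?_, ?_⟩
  · exact (sub_one_lt _).trans_le hb
  · exact (sub_one_lt _).trans_le he

/-- An index of depth at least `t` lies weakly below the ladder segment `Δ_{j_t}`. -/
theorem depth_le_ladder (h : D.DepthSpec d' d) {i : Fin D.n} {t : Fin D.l}
    (ht : (t : ℤ) ≤ d (Sum.inl i)) :
    (D.iseg i).b ≤ (D.jseg t).b ∧ (D.iseg i).e ≤ (D.jseg t).e := by
  have h1 := depth_le_dPrime h i
  obtain ⟨hl, h2, h3⟩ := (h.1 i).1
  simp only [Segment.shiftDown] at h2 h3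
  rcases (show (t : ℕ) ≤ d' i by omega).lt_or_eq with hlt | heq
  · obtain ⟨h4, h5⟩ := D.ladder t ⟨d' i, hl⟩ hlt
    omega
  · have : t = ⟨d' i, hl⟩ := Fin.ext heq
    rw [this]
    omega

/-- If the depth of `i` is smaller than `𝔡'(i)`, some segment `≪ Δ_i` has the next depth. -/
theorem exists_depth_succ (h : D.DepthSpec d' d) {i : Fin D.n} (hi : d (Sum.inl i) < d' i) :
    ∃ z, Segment.ll (D.iseg z) (D.iseg i) ∧ d (Sum.inl z) = d (Sum.inl i) + 1 := by
  obtain ⟨k, c, hc0, hc, hz⟩ := (h.2.1 i).1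
  cases k with
  | zero => simp [hc0] at hz; omega
  | succ k =>
    have hll := hc 0 (by omega)
    rw [hc0] at hll
    refine ⟨c 1, hll, ?_⟩
    have h1 : d (Sum.inl i) < d (Sum.inl (c 1)) := depth_lt_of_ll h hll
    have h2 := @(h.2.1 (c 1)).2 ((d' (c (k + 1)) : ℤ) - (k : ℤ))
      ⟨k, fun r => c (r + 1), rfl, fun r hr => hc (r + 1) (by omega), rfl⟩
    push_cast at hz
    omega

/-- If `Δ_i` lies weakly below `Δ_{j_t}` but `i` has smaller depth than `t` (by `m + 1`), then some
segment `≪ Δ_i` has depth exactly `t`: as long as the depth is below `t ≤ 𝔡'`, a step down of depth one is available. -/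
theorem exists_depth_eq (h : D.DepthSpec d' d) {t : Fin D.l} (m : ℕ) : ∀ i : Fin D.n,
    d (Sum.inl i) + (m + 1) = t → (D.iseg i).b ≤ (D.jseg t).b → (D.iseg i).e ≤ (D.jseg t).e →
    ∃ z, Segment.ll (D.iseg z) (D.iseg i) ∧ d (Sum.inl z) = t := by
  induction m with
  | zero =>
    intro i hi hb he
    have := le_dPrime h hb he
    obtain ⟨z, hz, hd⟩ := exists_depth_succ h (i := i) (by omega)
    exact ⟨z, hz, by push_cast at hi; omega⟩
  | succ m ih =>
    intro i hi hb he
    have := le_dPrime h hb he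
    obtain ⟨w, hw, hd⟩ := exists_depth_succ h (i := i) (by omega)
    obtain ⟨hw1, hw2⟩ := hw
    obtain ⟨z, ⟨hz1, hz2⟩, hdz⟩ := ih w (by push_cast at hi; omega) (by omega) (by omega)
    exact ⟨z, ⟨by omega, by omega⟩, hdz⟩

/-- Among segments with a common end point, the depth is antitone in the begin point. -/
theorem depth_anti (h : D.DepthSpec d' d) {i y : Fin D.n} (he : (D.iseg y).e = (D.iseg i).e)
    (hb : (D.iseg y).b ≤ (D.iseg i).b) : d (Sum.inl i) ≤ d (Sum.inl y) := by
  by_cases hy : d (Sum.inl y) < d' y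
  · obtain ⟨z, ⟨hz1, hz2⟩, hd⟩ := exists_depth_succ h hy
    have := depth_lt_of_ll h (i := i) (i' := z) ⟨by omega, by omega⟩
    omega
  · have h1 := depth_le_dPrime h i
    obtain ⟨hl, h2, h3⟩ := (h.1 i).1
    simp only [Segment.shiftDown] at h2 h3
    have := le_dPrime h (i := y) (t := ⟨d' i, hl⟩) (by omega) (by omega)
    simp only at this
    omega

/-! ### End points along the cycles of `σ` -/

theorem begin_le_of_lt {i i' : Fin D.n} (hlt : i < i') : (D.iseg i).b ≤ (D.iseg i').b := by
  rcases D.iOrder i' i hlt with h1 | h1 <;> omega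

theorem lt_of_begin_lt {i i' : Fin D.n} (hlt : (D.iseg i).b < (D.iseg i').b) : i < i' := by
  rcases lt_trichotomy i i' with h1 | h1 | h1
  · exact h1
  · subst h1; omega
  · have := begin_le_of_lt h1; omega

theorem end_le_of_lt (h : D.DepthSpec d' d) {i i' : Fin D.n} (hlt : i < i')
    (hd : d (Sum.inl i) = d (Sum.inl i')) : (D.iseg i').e ≤ (D.iseg i).e := by
  rcases D.iOrder i' i hlt with h1 | h1
  · by_contra hcon
    have := depth_lt_of_ll h (i := i') (i' := i) ⟨h1, by omega⟩
    omega
  · exact h1.2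

theorem end_le_of_le (h : D.DepthSpec d' d) {i i' : Fin D.n} (hle : i ≤ i')
    (hd : d (Sum.inl i) = d (Sum.inl i')) : (D.iseg i').e ≤ (D.iseg i).e := by
  rcases hle.lt_or_eq with h1 | h1
  · exact end_le_of_lt h h1 hd
  · rw [h1]

/-- An element of `I` that comes later than `x` in the cycle of `x` comes weakly later
than `σ x`. -/
theorem end_sigma_inl_le (h : D.DepthSpec d' d) (hσ : D.SigmaSpec d σ) {x z : Fin D.n}
    (hlt : z < x) (hd : d (Sum.inl z) = d (Sum.inl x)) :
    (D.segOf (σ (Sum.inl x))).e ≤ (D.iseg z).e := by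
  rcases hσ.1 x with ⟨i', hi', hs⟩ | ⟨hne, -⟩
  · rw [hs]
    exact end_le_of_le h (hi'.2 ⟨hlt, hd⟩) (hd.trans hi'.1.2.symm)
  · exact absurd ⟨z, hlt, hd⟩ hne

theorem end_sigma_inr_le (h : D.DepthSpec d' d) (hσ : D.SigmaSpec d σ) {t : Fin D.l} {z : Fin D.n}
    (hd : d (Sum.inl z) = t) : (D.segOf (σ (Sum.inr t))).e ≤ (D.iseg z).e := by
  rcases hσ.2 t with ⟨i', hi', hs⟩ | ⟨hne, -⟩
  · rw [hs]
    exact end_le_of_le h (hi'.2 hd) (hd.trans hi'.1.symm)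
  · exact absurd ⟨z, hd⟩ hne

theorem depth_sigma (h : D.DepthSpec d' d) (hσ : D.SigmaSpec d σ) (x : Fin D.n ⊕ Fin D.l) :
    d (σ x) = d x := by
  rcases x with i | t
  · rcases hσ.1 i with ⟨i', hi', hs⟩ | ⟨-, t, ht, hs⟩
    · rw [hs, hi'.1.2]
    · rw [hs, h.2.2, ht]
  · rcases hσ.2 t with ⟨i', hi', hs⟩ | ⟨-, hs⟩
    · rw [hs, h.2.2]; exact hi'.1
    · rw [hs]

/-- Every depth occurring in `𝔪` is a position in the ladder: the cycle of `i` passes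
through `J`. -/
theorem exists_ladder_index (hσ : D.SigmaSpec d σ) (i : Fin D.n) :
    ∃ t : Fin D.l, (t : ℤ) = d (Sum.inl i) := by
  induction i using WellFoundedLT.induction with
  | ind i ih =>
    rcases hσ.1 i with ⟨i', hi', hs⟩ | ⟨-, t, ht, hs⟩
    · obtain ⟨t, ht⟩ := ih i' hi'.1.1
      exact ⟨t, ht.trans hi'.1.2⟩
    · exact ⟨t, ht⟩

theorem end_le_sigma (h : D.DepthSpec d' d) (hσ : D.SigmaSpec d σ) (i : Fin D.n) :
    (D.iseg i).e ≤ (D.segOf (σ (Sum.inl i))).e := by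
  rcases hσ.1 i with ⟨i', hi', hs⟩ | ⟨-, t, ht, hs⟩
  · rw [hs]; exact end_le_of_lt h hi'.1.1 hi'.1.2
  · rw [hs]; exact (depth_le_ladder h ht.le).2

/-! ### Entrances and exits of the blocks of a fixed end point -/

/-- The second entries of the pairs in `ν₁` and `ν₃` with first entry `i₁`: the elements `x` with
`b(Δ_x) ≥ b(Δ_{i₁})` such that `σ x`, but not `x` itself, has the end point of `Δ_{i₁}`.  The last
condition is imposed for `x ∈ I` only, as elements of `J` always count as entrances. -/
def IsEntrance (D : KVData) (σ : Equiv.Perm (Fin D.n ⊕ Fin D.l)) (i₁ : Fin D.n) :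
    Fin D.n ⊕ Fin D.l → Prop
  | Sum.inl x => (D.iseg i₁).b ≤ (D.iseg x).b ∧ (D.iseg x).e < (D.segOf (σ (Sum.inl x))).e ∧
      (D.segOf (σ (Sum.inl x))).e = (D.iseg i₁).e
  | Sum.inr t => (D.iseg i₁).b ≤ (D.jseg t).b ∧ (D.segOf (σ (Sum.inr t))).e = (D.iseg i₁).e

/-- The second entries of the pairs in `ν₂` with first entry `i₁`. -/
def IsExit (D : KVData) (σ : Equiv.Perm (Fin D.n ⊕ Fin D.l)) (i₁ y : Fin D.n) : Prop :=
  (D.iseg i₁).b < (D.iseg y).b ∧ (D.iseg i₁).e = (D.iseg y).e ∧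
    (D.iseg y).e < (D.segOf (σ (Sum.inl y))).e

theorem entrance_injOn (h : D.DepthSpec d' d) (hσ : D.SigmaSpec d σ) (i₁ : Fin D.n) :
    Set.InjOn d {x | D.IsEntrance σ i₁ x} := by
  have key : ∀ x y : Fin D.n, D.IsEntrance σ i₁ (Sum.inl x) → D.IsEntrance σ i₁ (Sum.inl y) →
      d (Sum.inl x) = d (Sum.inl y) → ¬ x < y := by
    rintro x y ⟨-, hx2, hx3⟩ ⟨-, hy2, hy3⟩ hd hlt
    have := end_sigma_inl_le h hσ hlt hd
    omega
  have key' : ∀ (x : Fin D.n) (t : Fin D.l), D.IsEntrance σ i₁ (Sum.inl x) →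
      D.IsEntrance σ i₁ (Sum.inr t) → d (Sum.inl x) ≠ d (Sum.inr t) := by
    rintro x t ⟨-, hx2, hx3⟩ ⟨-, hy2⟩ hd
    have := end_sigma_inr_le h hσ (hd.trans (h.2.2 t))
    omega
  rintro (x | t) hx (y | s) hy hd
  · rcases lt_trichotomy x y with h1 | h1 | h1
    · exact absurd h1 (key x y hx hy hd)
    · rw [h1]
    · exact absurd h1 (key y x hy hx hd.symm)
  · exact absurd hd (key' x s hx hy)
  · exact absurd hd.symm (key' y t hy hx)
  · rw [h.2.2, h.2.2] at hd
    congr 1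
    exact Fin.ext (by exact_mod_cast hd)

theorem exit_injOn (h : D.DepthSpec d' d) (hσ : D.SigmaSpec d σ) (i₁ : Fin D.n) :
    Set.InjOn (fun y => d (Sum.inl y)) {y | D.IsExit σ i₁ y} := by
  have key : ∀ x y : Fin D.n, D.IsExit σ i₁ x → D.IsExit σ i₁ y →
      d (Sum.inl x) = d (Sum.inl y) → ¬ x < y := by
    rintro x y ⟨-, hx2, hx3⟩ ⟨-, hy2, hy3⟩ hd hlt
    have := end_sigma_inl_le h hσ hlt hd
    omega
  intro x hx y hy hd
  rcases lt_trichotomy x y with h1 | h1 | h1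
  · exact absurd h1 (key x y hx hy hd)
  · exact h1
  · exact absurd h1 (key y x hy hx hd.symm)

/-- Walking backwards along the cycle of `y` from a point of the block meets its entrance. -/
theorem exists_entrance (h : D.DepthSpec d' d) (hσ : D.SigmaSpec d σ) {i₁ : Fin D.n} (y : Fin D.n)
    (hb : (D.iseg i₁).b ≤ (D.iseg y).b) (he : (D.iseg i₁).e = (D.iseg y).e) :
    ∃ x, D.IsEntrance σ i₁ x ∧ d x = d (Sum.inl y) := by
  induction y using WellFoundedGT.induction with
  | ind y ih =>
    obtain ⟨x, hx⟩ := σ.surjective (Sum.inl y)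
    have hd := depth_sigma h hσ x
    rw [hx] at hd
    have hex : (D.segOf (σ x)).e = (D.iseg y).e := by rw [hx]; rfl
    rcases x with x | t
    · rcases hσ.1 x with ⟨i', hi', hs⟩ | ⟨-, t, ht, hs⟩
      · obtain rfl : i' = y := Sum.inl_injective (hs.symm.trans hx)
        have h1 := end_le_sigma h hσ x
        have h2 := begin_le_of_lt hi'.1.1
        rcases h1.lt_or_eq with h1 | h1
        · exact ⟨Sum.inl x, ⟨by omega, h1, by omega⟩, hd.symm⟩
        · obtain ⟨w, hw, hdw⟩ := ih x hi'.1.1 (by omega) (by omega)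
          exact ⟨w, hw, hdw.trans hd.symm⟩
      · rw [hs] at hx; cases hx
    · have := depth_le_ladder h (i := y) (t := t) (by rw [hd, h.2.2])
      exact ⟨Sum.inr t, ⟨by omega, by omega⟩, hd.symm⟩

/-- Walking forwards along the cycle of `y` from a point of the block meets an exit, unless
the ladder segment of the cycle has the same end point. -/
theorem exists_last (h : D.DepthSpec d' d) (hσ : D.SigmaSpec d σ) {t : Fin D.l} (y : Fin D.n)
    (hd : d (Sum.inl y) = t) (ht : (D.jseg t).e ≠ (D.iseg y).e) :
    ∃ z, d (Sum.inl z) = t ∧ (D.iseg z).e = (D.iseg y).e ∧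
      (D.iseg z).e < (D.segOf (σ (Sum.inl z))).e := by
  induction y using WellFoundedLT.induction with
  | ind y ih =>
    rcases (end_le_sigma h hσ y).lt_or_eq with h1 | h1
    · exact ⟨y, hd, rfl, h1⟩
    · rcases hσ.1 y with ⟨i', hi', hs⟩ | ⟨-, s, hs', hs⟩
      · have h2 : (D.iseg y).e = (D.iseg i').e := by rw [h1, hs]; rfl
        obtain ⟨z, hz1, hz2, hz3⟩ := ih i' hi'.1.1 (hi'.1.2.trans hd) (by omega)
        exact ⟨z, hz1, by omega, hz3⟩
      · exfalso
        obtain rfl : s = t := Fin.ext (by exact_mod_cast hs'.trans hd)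
        rw [hs] at h1
        exact ht h1.symm

theorem depth_ne_of_isExit (h : D.DepthSpec d' d) (hσ : D.SigmaSpec d σ) {i₁ y : Fin D.n}
    (hy : D.IsExit σ i₁ y) : d (Sum.inl y) ≠ d (Sum.inl i₁) := by
  obtain ⟨h1, h2, h3⟩ := hy
  intro hd
  have := end_sigma_inl_le h hσ (lt_of_begin_lt h1) hd.symm
  omega

/-- The position `t` of the cycle of an entrance `x`, with what the entrance condition says
about it: `Δ_{i₁}` lies weakly below `Δ_{j_t}`, and no element of the cycle is `≪ Δ_{i₁}`. -/
theorem entrance_fiber (h : D.DepthSpec d' d) (hσ : D.SigmaSpec d σ) {i₁ : Fin D.n}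
    {x : Fin D.n ⊕ Fin D.l} (hx : D.IsEntrance σ i₁ x) :
    ∃ t : Fin D.l, d x = t ∧ (D.segOf (σ x)).e = (D.iseg i₁).e ∧
      (D.iseg i₁).b ≤ (D.jseg t).b ∧
      (D.iseg i₁).e ≤ (D.jseg t).e ∧
      ∀ z, d (Sum.inl z) = t → ¬ Segment.ll (D.iseg z) (D.iseg i₁) := by
  have hle : ∀ t : Fin D.l, d (σ x) = t → (D.segOf (σ x)).e ≤ (D.jseg t).e := by
    intro t ht
    rcases hσx : σ x with y | s <;> rw [hσx] at ht
    · exact (depth_le_ladder h ht.ge).2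
    · rw [h.2.2] at ht
      obtain rfl : s = t := Fin.ext (by exact_mod_cast ht)
      exact le_rfl
  rw [depth_sigma h hσ] at hle
  rcases x with x | t
  · obtain ⟨h1, h2, h3⟩ := hx
    obtain ⟨t, ht⟩ := exists_ladder_index hσ x
    have h4 := depth_le_ladder h ht.le
    have h5 := hle t ht.symm
    refine ⟨t, ht.symm, h3, by omega, by omega, ?_⟩
    rintro z hz ⟨hz1, hz2⟩
    have := end_sigma_inl_le h hσ (x := x) (z := z) (lt_of_begin_lt (by omega)) (hz.trans ht)
    omega
  · obtain ⟨h1, h3⟩ := hx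
    have h5 := hle t (h.2.2 t)
    refine ⟨t, h.2.2 t, h3, h1, by omega, ?_⟩
    rintro z hz ⟨hz1, hz2⟩
    have := end_sigma_inr_le h hσ hz
    omega

theorem entrance_depth (h : D.DepthSpec d' d) (hσ : D.SigmaSpec d σ) {i₁ : Fin D.n}
    {x : Fin D.n ⊕ Fin D.l} (hx : D.IsEntrance σ i₁ x) :
    d x = d (Sum.inl i₁) ∨ ∃ y, D.IsExit σ i₁ y ∧ d (Sum.inl y) = d x := by
  obtain ⟨t, hdt, hex, hb, he, hno⟩ := entrance_fiber h hσ hx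
  rcases lt_trichotomy (d x) (d (Sum.inl i₁)) with hlt | heq | hgt
  · right
    obtain ⟨s, hs⟩ := exists_ladder_index hσ i₁
    have h1 := depth_le_ladder h hs.le
    have h2 := D.ladder t s (Fin.lt_def.2 (by omega))
    have h3 := h2.2
    have hdσ := depth_sigma h hσ x
    rcases hσx : σ x with y | r
    · rw [hσx] at hex hdσ
      simp only [segOf, Sum.elim_inl] at hex
      obtain ⟨z, hz1, hz2, hz3⟩ := exists_last h hσ (t := t) y (hdσ.trans hdt) (by omega)
      refine ⟨z, ⟨?_, by omega, hz3⟩, hz1.trans hdt.symm⟩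
      by_contra hcon
      have := depth_anti h (i := i₁) (y := z) (by omega) (by omega)
      omega
    · exfalso
      rw [hσx] at hex hdσ
      rw [h.2.2, hdt] at hdσ
      obtain rfl : r = t := Fin.ext (by exact_mod_cast hdσ)
      simp only [segOf, Sum.elim_inr] at hex
      omega
  · exact Or.inl heq
  · exfalso
    obtain ⟨z, hz, hdz⟩ := exists_depth_eq h (t := t) (d x - d (Sum.inl i₁) - 1).toNat i₁
      (by omega) hb he
    exact hno z hdz hz

theorem image_entrances (h : D.DepthSpec d' d) (hσ : D.SigmaSpec d σ) (i₁ : Fin D.n) :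
    Set.image d {x | D.IsEntrance σ i₁ x} =
      insert (d (Sum.inl i₁)) (Set.image (fun y => d (Sum.inl y)) {y | D.IsExit σ i₁ y}) := by
  ext z
  constructor
  · rintro ⟨x, hx, rfl⟩
    exact entrance_depth h hσ hx
  · rintro (rfl | ⟨y, hy, rfl⟩)
    · exact exists_entrance h hσ i₁ le_rfl rfl
    · exact exists_entrance h hσ y hy.1.le hy.2.1

theorem ncard_entrances (h : D.DepthSpec d' d) (hσ : D.SigmaSpec d σ) (i₁ : Fin D.n) :
    {x | D.IsEntrance σ i₁ x}.ncard = {y | D.IsExit σ i₁ y}.ncard + 1 := by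
  have h1 := congrArg Set.ncard (image_entrances h hσ i₁)
  rw [Set.InjOn.ncard_image (entrance_injOn h hσ i₁), Set.ncard_insert_of_notMem,
    Set.InjOn.ncard_image (exit_injOn h hσ i₁)] at h1
  · exact h1
  · rintro ⟨y, hy, hd⟩
    exact depth_ne_of_isExit h hσ hy hd

/-! ### Summation over the first entry -/

theorem ncard_pairs {α β : Type*} [Fintype α] [Fintype β] (P : α × β → Prop) :
    {p | P p}.ncard = ∑ a, {b | P (a, b)}.ncard := by
  classical
  simp only [Set.ncard_eq_toFinset_card', Set.toFinset_ofPred, Finset.card_filter,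
    Fintype.sum_prod_type]

theorem ncard_sum {α β : Type*} [Fintype α] [Fintype β] (Q : α ⊕ β → Prop) :
    {x | Q x}.ncard = {a | Q (Sum.inl a)}.ncard + {b | Q (Sum.inr b)}.ncard := by
  classical
  simp only [Set.ncard_eq_toFinset_card', Set.toFinset_ofPred, Finset.card_filter,
    Fintype.sum_sum_type]

end KVData

/-- Let `(𝔩,𝔪)` be a permissible pair with the algorithm notations in
place.  Then `D(𝔩,𝔪) = |𝔪|`, i.e. `|ν(𝔩,𝔪)₁| - |ν(𝔩,𝔪)₂| + |ν(𝔩,𝔪)₃|` equals the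
number of segments of `𝔪` (recall `e(Δ♣_x) = e(Δ_{σ(x)})` and `b(Δ♣_x) = b(Δ_x)`). -/
theorem D_invariant_eq_card (D : KVData) (d' : Fin D.n → ℕ)
    (d : Fin D.n ⊕ Fin D.l → ℤ) (σ : Equiv.Perm (Fin D.n ⊕ Fin D.l))
    (hdep : D.DepthSpec d' d) (hσ : D.SigmaSpec d σ) :
    (({p : Fin D.n × Fin D.n |
        (D.iseg p.1).b ≤ (D.iseg p.2).b ∧
        (D.iseg p.2).e < (D.segOf (σ (Sum.inl p.2))).e ∧
        (D.segOf (σ (Sum.inl p.2))).e = (D.iseg p.1).e}.ncard : ℤ)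
      - ({p : Fin D.n × Fin D.n |
        (D.iseg p.1).b < (D.iseg p.2).b ∧
        (D.iseg p.1).e = (D.iseg p.2).e ∧
        (D.iseg p.2).e < (D.segOf (σ (Sum.inl p.2))).e}.ncard : ℤ)
      + ({p : Fin D.n × Fin D.l |
        (D.iseg p.1).b ≤ (D.jseg p.2).b ∧
        (D.segOf (σ (Sum.inr p.2))).e = (D.iseg p.1).e}.ncard : ℤ)) = (D.n : ℤ) := by
  rw [KVData.ncard_pairs, KVData.ncard_pairs, KVData.ncard_pairs]
  push_cast
  rw [← Finset.sum_sub_distrib, ← Finset.sum_add_distrib]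
  refine (Finset.sum_congr rfl (g := fun _ => (1 : ℤ)) fun i₁ _ => ?_).trans (by simp)
  have key := KVData.ncard_entrances hdep hσ i₁
  rw [KVData.ncard_sum] at key
  simp only [KVData.IsEntrance, KVData.IsExit] at key
  omega
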